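/- arXiv:2306.04467 — 2 statements merged into one kernel-verified Lean document; each statement's English description precedes it below -/
import Mathlib

section
/- Let h > 0, G > 0, U, V ∈ ℝ, λ = 1/(Gh), and let g(u,v) = h·(λ/π)·exp(−λ((u−U)² + (v−V)²)) be the shallow-water Maxwellian equilibrium distribution on ℝ². Then the u-weighted moments of g yield the shallow water x-direction flux vector: ∫∫_{ℝ²} u·g du dv = hU, ∫∫_{ℝ²} u²·g du dv = hU² + ½Gh², and ∫∫_{ℝ²} uv·g du dv = hUV; analogously the v-weighted moments yield the y-direction flux: ∫∫ v·g = hV, ∫∫ uv·g = hUV, ∫∫ v²·g = hV² + ½Gh². In particular the choice λ = 1/(Gh) makes the kinetic pressure ∫∫ (u−U)²·g du dv equal to the hydrostatic shallow water pressure ½Gh². -/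
open MeasureTheory

/-- The shallow-water Maxwellian equilibrium distribution with water height `h`,
velocity `(U,V)` and gravitational constant `G`, where `λ = 1/(Gh)`, as a function of
the particle velocity `p = (u,v) ∈ ℝ²`. -/
noncomputable def swMaxwellian (G h U V : ℝ) (p : ℝ × ℝ) : ℝ :=
  h * ((1 / (G * h)) / Real.pi) *
    Real.exp (-(1 / (G * h)) * ((p.1 - U) ^ 2 + (p.2 - V) ^ 2))

/-!
The Maxwellian is `h` times the density of a product of two Gaussian laws, with means `U` and `V`
and common variance `1 / (2λ) = Gh / 2`. Its moments are therefore `h` times products of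
one-dimensional Gaussian moments, and the pressure is `h` times the variance.
-/

open ProbabilityTheory
open scoped NNReal

section Gaussian

lemma integral_sub_sq_gaussianReal (μ : ℝ) (v : ℝ≥0) :
    ∫ x, (x - μ) ^ 2 ∂gaussianReal μ v = v := by
  simpa only [variance_eq_integral aemeasurable_id', integral_id_gaussianReal]
    using variance_fun_id_gaussianReal (μ := μ) (v := v)

lemma integral_sq_gaussianReal (μ : ℝ) (v : ℝ≥0) :
    ∫ x, x ^ 2 ∂gaussianReal μ v = μ ^ 2 + v := by
  have variance_eq : ∫ x, x ^ 2 ∂gaussianReal μ v - μ ^ 2 = v := by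
    simpa only [variance_eq_sub (memLp_id_gaussianReal 2), Pi.pow_apply, id_eq,
      integral_id_gaussianReal] using variance_id_gaussianReal (μ := μ) (v := v)
  linarith

lemma gaussianPDFReal_mul_gaussianPDFReal (μ ν : ℝ) (v : ℝ≥0) (x y : ℝ) :
    gaussianPDFReal μ v x * gaussianPDFReal ν v y =
      (2 * Real.pi * v)⁻¹ * Real.exp (-((x - μ) ^ 2 + (y - ν) ^ 2) / (2 * v)) := by
  have inv_sqrt_mul_self : (√(2 * Real.pi * v))⁻¹ * (√(2 * Real.pi * v))⁻¹ =
      (2 * Real.pi * v)⁻¹ := by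
    rw [← mul_inv, Real.mul_self_sqrt (by positivity)]
  rw [gaussianPDFReal, gaussianPDFReal, mul_mul_mul_comm, inv_sqrt_mul_self, ← Real.exp_add]
  ring_nf

lemma integral_prod_gaussianReal_eq_integral_smul {E : Type*} [NormedAddCommGroup E]
    [NormedSpace ℝ E] {μ ν : ℝ} {v w : ℝ≥0} (hv : v ≠ 0) (hw : w ≠ 0) (f : ℝ × ℝ → E) :
    ∫ p, f p ∂(gaussianReal μ v).prod (gaussianReal ν w) =
      ∫ p : ℝ × ℝ, (gaussianPDFReal μ v p.1 * gaussianPDFReal ν w p.2) • f p := by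
  rw [gaussianReal_of_var_ne_zero μ hv, gaussianReal_of_var_ne_zero ν hw,
    prod_withDensity (by fun_prop) (by fun_prop),
    integral_withDensity_eq_integral_toReal_smul (by fun_prop)
      (ae_of_all _ fun _ ↦ ENNReal.mul_lt_top gaussianPDF_lt_top gaussianPDF_lt_top)]
  simp only [ENNReal.toReal_mul, toReal_gaussianPDF, Measure.volume_eq_prod]

end Gaussian

/-- The variance `1 / (2λ) = Gh / 2` of each velocity component under the shallow-water
Maxwellian. It is a nonnegative real, as `gaussianReal` requires, and so is truncated to `0`
when `Gh < 0`. -/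
noncomputable def swVariance (G h : ℝ) : ℝ≥0 := (G * h / 2).toNNReal

section Maxwellian

variable {G h : ℝ}

lemma coe_swVariance (hGh : 0 ≤ G * h) : (swVariance G h : ℝ) = G * h / 2 :=
  Real.coe_toNNReal _ (by positivity)

lemma swVariance_ne_zero (hGh : 0 < G * h) : swVariance G h ≠ 0 :=
  (Real.toNNReal_pos.mpr (by positivity)).ne'

lemma swMaxwellian_eq_mul_gaussianPDFReal (hGh : 0 ≤ G * h) (U V : ℝ) (p : ℝ × ℝ) :
    swMaxwellian G h U V p =
      h * (gaussianPDFReal U (swVariance G h) p.1 * gaussianPDFReal V (swVariance G h) p.2) := by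
  rw [gaussianPDFReal_mul_gaussianPDFReal, coe_swVariance hGh, swMaxwellian]
  ring_nf

lemma integral_mul_swMaxwellian (hGh : 0 < G * h) (U V : ℝ) (f : ℝ × ℝ → ℝ) :
    ∫ p, f p * swMaxwellian G h U V p =
      h * ∫ p, f p ∂(gaussianReal U (swVariance G h)).prod (gaussianReal V (swVariance G h)) := by
  have hv := swVariance_ne_zero hGh
  rw [integral_prod_gaussianReal_eq_integral_smul hv hv, ← integral_const_mul]
  congr with p
  rw [swMaxwellian_eq_mul_gaussianPDFReal hGh.le, smul_eq_mul]
  ring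

lemma integral_comp_fst_mul_swMaxwellian (hGh : 0 < G * h) (U V : ℝ) (f : ℝ → ℝ) :
    ∫ p : ℝ × ℝ, f p.1 * swMaxwellian G h U V p =
      h * ∫ u, f u ∂gaussianReal U (swVariance G h) := by
  rw [integral_mul_swMaxwellian hGh U V fun p ↦ f p.1, integral_fun_fst, probReal_univ, one_smul]

lemma integral_comp_snd_mul_swMaxwellian (hGh : 0 < G * h) (U V : ℝ) (f : ℝ → ℝ) :
    ∫ p : ℝ × ℝ, f p.2 * swMaxwellian G h U V p =
      h * ∫ v, f v ∂gaussianReal V (swVariance G h) := by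
  rw [integral_mul_swMaxwellian hGh U V fun p ↦ f p.2, integral_fun_snd, probReal_univ, one_smul]

lemma integral_comp_fst_mul_comp_snd_mul_swMaxwellian (hGh : 0 < G * h) (U V : ℝ) (f g : ℝ → ℝ) :
    ∫ p : ℝ × ℝ, f p.1 * g p.2 * swMaxwellian G h U V p =
      h * ((∫ u, f u ∂gaussianReal U (swVariance G h)) *
        ∫ v, g v ∂gaussianReal V (swVariance G h)) := by
  rw [integral_mul_swMaxwellian hGh U V fun p ↦ f p.1 * g p.2, integral_prod_mul]

end Maxwellian

/-- The `u`-weighted moments of the shallow-water Maxwellian yield the x-direction flux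
vector `(hU, hU² + ½Gh², hUV)ᵀ` of the shallow water equations, the `v`-weighted moments
yield the y-direction flux `(hV, hUV, hV² + ½Gh²)ᵀ`, and the kinetic pressure
`∫∫ (u−U)²·g` equals the hydrostatic shallow water pressure `½Gh²`. -/
theorem swMaxwellian_flux_moments (h G U V : ℝ) (hh : 0 < h) (hG : 0 < G) :
    (∫ p : ℝ × ℝ, p.1 * swMaxwellian G h U V p) = h * U ∧
    (∫ p : ℝ × ℝ, p.1 ^ 2 * swMaxwellian G h U V p) = h * U ^ 2 + G * h ^ 2 / 2 ∧
    (∫ p : ℝ × ℝ, p.1 * p.2 * swMaxwellian G h U V p) = h * U * V ∧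
    (∫ p : ℝ × ℝ, p.2 * swMaxwellian G h U V p) = h * V ∧
    (∫ p : ℝ × ℝ, p.1 * p.2 * swMaxwellian G h U V p) = h * U * V ∧
    (∫ p : ℝ × ℝ, p.2 ^ 2 * swMaxwellian G h U V p) = h * V ^ 2 + G * h ^ 2 / 2 ∧
    (∫ p : ℝ × ℝ, (p.1 - U) ^ 2 * swMaxwellian G h U V p) = G * h ^ 2 / 2 := by
  have hGh : 0 < G * h := mul_pos hG hh
  have variance_eq := coe_swVariance hGh.le
  have moment_fst := integral_comp_fst_mul_swMaxwellian hGh U V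
  have moment_snd := integral_comp_snd_mul_swMaxwellian hGh U V
  have moment_fst_snd : ∫ p : ℝ × ℝ, p.1 * p.2 * swMaxwellian G h U V p = h * U * V := by
    rw [integral_comp_fst_mul_comp_snd_mul_swMaxwellian hGh U V (fun u ↦ u) (fun v ↦ v),
      integral_id_gaussianReal, integral_id_gaussianReal, mul_assoc]
  refine ⟨?_, ?_, moment_fst_snd, ?_, moment_fst_snd, ?_, ?_⟩
  · rw [moment_fst (fun u ↦ u), integral_id_gaussianReal]
  · rw [moment_fst (fun u ↦ u ^ 2), integral_sq_gaussianReal, variance_eq]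
    ring
  · rw [moment_snd (fun v ↦ v), integral_id_gaussianReal]
  · rw [moment_snd (fun v ↦ v ^ 2), integral_sq_gaussianReal, variance_eq]
    ring
  · rw [moment_fst (fun u ↦ (u - U) ^ 2), integral_sub_sq_gaussianReal, variance_eq]
    ring
end

section
/- Let f : ℝᵈ → ℝᵈ be C⁴ and let y : [0,T] → ℝᵈ solve the autonomous ODE y′ = f(y). Define D(w) = Df(w)·f(w) (the derivative of f along the flow). For a step size Δt > 0 consider the two-stage fourth-order (S2O4) update starting from y(t₀): w_half = y(t₀) + (Δt/2)·f(y(t₀)) + (Δt²/8)·D(y(t₀)), and w_next = y(t₀) + Δt·f(y(t₀)) + (Δt²/6)·D(y(t₀)) + (Δt²/3)·D(w_half). Then the update is fourth-order accurate in time: ‖w_next − y(t₀ + Δt)‖ = O(Δt⁵) as Δt → 0, uniformly on compact sets. -/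
/-!
Write `L g = Dg · f` for the derivative of `g` along the flow of `f`. Along a solution `y` the
derivatives of `g ∘ y` are `(L^k g) ∘ y`, so Taylor's theorem compares `g (y (t + h))` with the
truncated Lie series `∑ k ≤ n, h ^ k / k! • L^k g (y t)`, with a remainder `O(h ^ (n + 1))` that is
uniform in `t` by compactness. The half stage of S2O4 is the Lie series of `id` at `h / 2` truncated
after order `2`. If `D = L f` at the half stage is replaced by the Lie series of `D` at `h / 2`,
again truncated after order `2`, the full step becomes exactly the Lie series of `id` at `h`
truncated after order `4`. Since `D` is Lipschitz on the compact set swept out by the half stages,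
this replacement costs `h ^ 2 / 3 * O(h ^ 3)`.
-/

open Set
open scoped Nat

section LieSeries

variable {E F : Type*} [NormedAddCommGroup E] [NormedSpace ℝ E]
  [NormedAddCommGroup F] [NormedSpace ℝ F]

/-- The Lie derivative of `g` along the autonomous vector field `f`, that is, the time derivative
of `g` along the solutions of `y' = f y`. The operator `D` of the S2O4 method is `lieDeriv f f`. -/
noncomputable def lieDeriv (f : E → E) (g : E → F) : E → F :=
  fun w => fderiv ℝ g w (f w)

/-- The Lie series of `g` along `f` up to and including order `n`: the formal Taylor polynomial in
`h` of `g` evaluated at time `h` on the solution of `y' = f y` starting from `w`. -/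
noncomputable def lieTaylor (f : E → E) (g : E → F) (n : ℕ) (h : ℝ) (w : E) : F :=
  ∑ k ∈ Finset.range (n + 1), ((k ! : ℝ)⁻¹ * h ^ k) • (lieDeriv f)^[k] g w

variable {f : E → E} {g : E → F} {n : ℕ}

theorem lieDeriv_id (f : E → E) : lieDeriv f id = f := by
  ext w
  simp [lieDeriv]

theorem contDiff_lieDeriv {m : WithTop ℕ∞} (hf : ContDiff ℝ m f) (hg : ContDiff ℝ (m + 1) g) :
    ContDiff ℝ m (lieDeriv f g) :=
  (hg.fderiv_right le_rfl).clm_apply hf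

theorem contDiff_iterate_lieDeriv (hf : ContDiff ℝ n f) (hg : ContDiff ℝ (n + 1) g) {k m : ℕ}
    (hkm : k + m ≤ n + 1) : ContDiff ℝ m ((lieDeriv f)^[k] g) := by
  induction k generalizing m with
  | zero => exact hg.of_le (by norm_cast; omega)
  | succ k ih =>
    rw [Function.iterate_succ_apply']
    exact contDiff_lieDeriv (hf.of_le (by norm_cast; omega))
      (by exact_mod_cast ih (m := m + 1) (by omega))

theorem continuous_iterate_lieDeriv (hf : ContDiff ℝ n f) (hg : ContDiff ℝ (n + 1) g) {k : ℕ}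
    (hk : k ≤ n + 1) : Continuous ((lieDeriv f)^[k] g) :=
  (contDiff_iterate_lieDeriv hf hg (m := 0) hk).continuous

theorem lieTaylor_zero_right (f : E → E) (g : E → F) (n : ℕ) (w : E) :
    lieTaylor f g n 0 w = g w := by
  simp [lieTaylor, Finset.sum_range_succ']

theorem continuous_lieTaylor (hf : ContDiff ℝ n f) (hg : ContDiff ℝ (n + 1) g) :
    Continuous fun p : ℝ × E => lieTaylor f g n p.1 p.2 := by
  refine continuous_finsetSum _ fun k hk => ?_
  have hcont := continuous_iterate_lieDeriv hf hg (Finset.mem_range.mp hk).le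
  fun_prop

variable {y : ℝ → E} {s : Set ℝ} {a b : ℝ}

theorem hasDerivWithinAt_comp_lieDeriv (hy : IsIntegralCurveOn y (fun _ => f) s) {t : ℝ}
    (ht : t ∈ s) (hg : DifferentiableAt ℝ g (y t)) :
    HasDerivWithinAt (g ∘ y) (lieDeriv f g (y t)) s t :=
  hg.hasFDerivAt.comp_hasDerivWithinAt t (hy t ht)

theorem hasDerivWithinAt_comp_iterate_lieDeriv (hf : ContDiff ℝ n f) (hg : ContDiff ℝ (n + 1) g)
    (hy : IsIntegralCurveOn y (fun _ => f) s) {k : ℕ} (hk : k ≤ n) {t : ℝ} (ht : t ∈ s) :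
    HasDerivWithinAt ((lieDeriv f)^[k] g ∘ y) ((lieDeriv f)^[k + 1] g (y t)) s t := by
  rw [Function.iterate_succ_apply']
  have hdiff : ContDiff ℝ (1 : ℕ) ((lieDeriv f)^[k] g) :=
    contDiff_iterate_lieDeriv hf hg (by omega)
  exact hasDerivWithinAt_comp_lieDeriv hy ht (hdiff.differentiable (by norm_num) (y t))

theorem iteratedDerivWithin_comp_eqOn (hf : ContDiff ℝ n f) (hg : ContDiff ℝ (n + 1) g)
    (hs : UniqueDiffOn ℝ s) (hy : IsIntegralCurveOn y (fun _ => f) s) {k : ℕ} (hk : k ≤ n + 1) :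
    EqOn (iteratedDerivWithin k (g ∘ y) s) ((lieDeriv f)^[k] g ∘ y) s := by
  induction k with
  | zero => simp [EqOn]
  | succ k ih =>
    intro t ht
    have ih := ih (by omega)
    rw [iteratedDerivWithin_succ, derivWithin_congr ih (ih ht)]
    exact (hasDerivWithinAt_comp_iterate_lieDeriv hf hg hy (by omega) ht).derivWithin (hs t ht)

theorem contDiffOn_comp_of_isIntegralCurveOn (hf : ContDiff ℝ n f) (hg : ContDiff ℝ (n + 1) g)
    (hs : UniqueDiffOn ℝ s) (hy : IsIntegralCurveOn y (fun _ => f) s) :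
    ContDiffOn ℝ (n + 1) (g ∘ y) s := by
  refine contDiffOn_of_continuousOn_differentiableOn_deriv (n := (n + 1 : ℕ))
    (fun k hk => ?_) (fun k hk => ?_)
  · have hk : k ≤ n + 1 := by exact_mod_cast hk
    exact ((continuous_iterate_lieDeriv hf hg hk).comp_continuousOn hy.continuousOn).congr
      (iteratedDerivWithin_comp_eqOn hf hg hs hy hk)
  · have hk : k < n + 1 := by exact_mod_cast hk
    exact DifferentiableOn.congr
      (fun t ht => (hasDerivWithinAt_comp_iterate_lieDeriv hf hg hy
        (by omega) ht).differentiableWithinAt)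
      (iteratedDerivWithin_comp_eqOn hf hg hs hy hk.le)

theorem taylorWithinEval_comp_eq_lieTaylor (hf : ContDiff ℝ n f) (hg : ContDiff ℝ (n + 1) g)
    (hs : UniqueDiffOn ℝ s) (hy : IsIntegralCurveOn y (fun _ => f) s) {t : ℝ} (ht : t ∈ s)
    (x : ℝ) : taylorWithinEval (g ∘ y) n s t x = lieTaylor f g n (x - t) (y t) := by
  rw [taylor_within_apply, lieTaylor]
  refine Finset.sum_congr rfl fun k hk => ?_
  rw [iteratedDerivWithin_comp_eqOn hf hg hs hy (Finset.mem_range.mp hk).le ht, Function.comp_apply]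

theorem norm_comp_sub_lieTaylor_le (hf : ContDiff ℝ n f) (hg : ContDiff ℝ (n + 1) g)
    (hab : a < b) (hy : IsIntegralCurveOn y (fun _ => f) (Icc a b)) {M : ℝ}
    (hM : ∀ t ∈ Icc a b, ‖(lieDeriv f)^[n + 1] g (y t)‖ ≤ M) :
    ‖g (y b) - lieTaylor f g n (b - a) (y a)‖ ≤ M * (b - a) ^ (n + 1) / n ! := by
  have hs : UniqueDiffOn ℝ (Icc a b) := uniqueDiffOn_Icc hab
  rw [← taylorWithinEval_comp_eq_lieTaylor hf hg hs hy (left_mem_Icc.mpr hab.le)]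
  refine taylor_mean_remainder_bound hab.le (contDiffOn_comp_of_isIntegralCurveOn hf hg hs hy)
    (right_mem_Icc.mpr hab.le) fun t ht => ?_
  rw [iteratedDerivWithin_comp_eqOn hf hg hs hy le_rfl ht]
  exact hM t ht

theorem exists_norm_comp_sub_lieTaylor_le (hf : ContDiff ℝ n f) (hg : ContDiff ℝ (n + 1) g)
    (hy : IsIntegralCurveOn y (fun _ => f) (Icc a b)) :
    ∃ C : ℝ, ∀ t ∈ Icc a b, ∀ h : ℝ, 0 ≤ h → t + h ≤ b →
      ‖g (y (t + h)) - lieTaylor f g n h (y t)‖ ≤ C * h ^ (n + 1) := by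
  obtain ⟨M, hM⟩ := isCompact_Icc.exists_bound_of_continuousOn
    ((continuous_iterate_lieDeriv hf hg le_rfl).comp_continuousOn hy.continuousOn)
  refine ⟨M / n !, fun t ht h hh hle => ?_⟩
  obtain rfl | hpos := hh.eq_or_lt
  · simp [lieTaylor_zero_right]
  have hsub : Icc t (t + h) ⊆ Icc a b := Icc_subset_Icc ht.1 hle
  have hbound := norm_comp_sub_lieTaylor_le hf hg (lt_add_of_pos_right t hpos) (hy.mono hsub)
    fun r hr => hM r (hsub hr)
  rwa [add_sub_cancel_left, mul_div_right_comm] at hbound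

theorem exists_lipschitzOnWith_lieTaylor_id (hf : ContDiff ℝ n f) (hg : ContDiff ℝ 1 g)
    (hy : ContinuousOn y (Icc a b)) (r : ℝ) :
    ∃ K, LipschitzOnWith K g
      ((fun p : ℝ × ℝ => lieTaylor f id n p.1 (y p.2)) '' (Icc 0 r ×ˢ Icc a b)) := by
  refine hg.locallyLipschitz.locallyLipschitzOn.exists_lipschitzOnWith_of_compact
    ((isCompact_Icc.prod isCompact_Icc).image_of_continuousOn ?_)
  exact (continuous_lieTaylor hf contDiff_id).comp_continuousOn
    (continuousOn_fst.prodMk (hy.comp continuousOn_snd fun _ hp => hp.2))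

theorem exists_norm_comp_lieTaylor_id_sub_le (hf : ContDiff ℝ n f) (hg : ContDiff ℝ 1 g)
    (hy : IsIntegralCurveOn y (fun _ => f) (Icc a b)) :
    ∃ C : ℝ, ∀ t ∈ Icc a b, ∀ h : ℝ, 0 ≤ h → t + h ≤ b →
      ‖g (lieTaylor f id n h (y t)) - g (y (t + h))‖ ≤ C * h ^ (n + 1) := by
  obtain ⟨C, hC⟩ := exists_norm_comp_sub_lieTaylor_le (g := id) hf contDiff_id hy
  obtain ⟨K, hK⟩ := exists_lipschitzOnWith_lieTaylor_id hf hg hy.continuousOn (b - a)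
  refine ⟨K * C, fun t ht h hh hle => ?_⟩
  have happrox := mem_image_of_mem (fun p : ℝ × ℝ => lieTaylor f id n p.1 (y p.2))
    (show (h, t) ∈ Icc 0 (b - a) ×ˢ Icc a b from ⟨⟨hh, by linarith [ht.1]⟩, ht⟩)
  have hexact := mem_image_of_mem (fun p : ℝ × ℝ => lieTaylor f id n p.1 (y p.2))
    (show (0, t + h) ∈ Icc 0 (b - a) ×ˢ Icc a b from
      ⟨⟨le_rfl, by linarith [ht.1]⟩, by linarith [ht.1], hle⟩)
  simp only [lieTaylor_zero_right, id] at hexact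
  calc ‖g (lieTaylor f id n h (y t)) - g (y (t + h))‖
      ≤ K * ‖lieTaylor f id n h (y t) - y (t + h)‖ := hK.norm_sub_le happrox hexact
    _ ≤ K * (C * h ^ (n + 1)) := by
      rw [norm_sub_rev]
      gcongr
      exact hC t ht h hh hle
    _ = K * C * h ^ (n + 1) := by ring

end LieSeries

section S2O4

variable {E : Type*} [NormedAddCommGroup E] [NormedSpace ℝ E] {f : E → E} {y : ℝ → E} {a b : ℝ}

/-- The intermediate state `w_half` of the S2O4 method, with step size `h` and starting from `w`. -/
noncomputable def s2o4Half (f : E → E) (h : ℝ) (w : E) : E :=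
  w + (h / 2) • f w + (h ^ 2 / 8) • lieDeriv f f w

/-- The state `w_next` produced by one step of the S2O4 method, with step size `h` and starting
from `w`. -/
noncomputable def s2o4Step (f : E → E) (h : ℝ) (w : E) : E :=
  w + h • f w + (h ^ 2 / 6) • lieDeriv f f w + (h ^ 2 / 3) • lieDeriv f f (s2o4Half f h w)

theorem s2o4Half_eq_lieTaylor (f : E → E) (h : ℝ) (w : E) :
    s2o4Half f h w = lieTaylor f id 2 (h / 2) w := by
  simp only [s2o4Half, lieTaylor, Finset.sum_range_succ, Finset.sum_range_zero,
    Function.iterate_succ_apply, Function.iterate_zero_apply, lieDeriv_id, Nat.factorial, id]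
  module

/-- The order conditions behind the weights `1 / 6` and `1 / 3`. -/
theorem lieTaylor_id_four_eq (f : E → E) (h : ℝ) (w : E) :
    lieTaylor f id 4 h w = w + h • f w + (h ^ 2 / 6) • lieDeriv f f w
      + (h ^ 2 / 3) • lieTaylor f (lieDeriv f f) 2 (h / 2) w := by
  simp only [lieTaylor, Finset.sum_range_succ, Finset.sum_range_zero,
    Function.iterate_succ_apply, Function.iterate_zero_apply, lieDeriv_id, Nat.factorial, id]
  module

theorem s2o4Step_sub_eq (f : E → E) (h : ℝ) (w mid next : E) :
    s2o4Step f h w - next =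
      (h ^ 2 / 3) • (lieDeriv f f (s2o4Half f h w) - lieDeriv f f mid)
      + (h ^ 2 / 3) • (lieDeriv f f mid - lieTaylor f (lieDeriv f f) 2 (h / 2) w)
      - (next - lieTaylor f id 4 h w) := by
  rw [s2o4Step, lieTaylor_id_four_eq]
  module

theorem norm_s2o4Step_sub_le (f : E → E) (h : ℝ) (w mid next : E) :
    ‖s2o4Step f h w - next‖ ≤
      h ^ 2 / 3 * ‖lieDeriv f f (s2o4Half f h w) - lieDeriv f f mid‖
      + h ^ 2 / 3 * ‖lieDeriv f f mid - lieTaylor f (lieDeriv f f) 2 (h / 2) w‖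
      + ‖next - lieTaylor f id 4 h w‖ := by
  have hweight : ‖h ^ 2 / 3‖ = h ^ 2 / 3 := Real.norm_of_nonneg (by positivity)
  rw [s2o4Step_sub_eq f h w mid next]
  refine (norm_sub_le _ _).trans ?_
  gcongr
  refine (norm_add_le _ _).trans_eq ?_
  rw [norm_smul, norm_smul, hweight]

theorem S2O4_fourth_order_general (hf : ContDiff ℝ 4 f)
    (hy : IsIntegralCurveOn y (fun _ => f) (Icc a b)) :
    ∃ C > (0 : ℝ), ∀ t ∈ Icc a b, ∀ h : ℝ, 0 ≤ h → t + h ≤ b →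
      ‖s2o4Step f h (y t) - y (t + h)‖ ≤ C * h ^ 5 := by
  have hf₂ : ContDiff ℝ (2 : ℕ) f := hf.of_le (by norm_num)
  have hD : ContDiff ℝ (3 : ℕ) (lieDeriv f f) :=
    contDiff_lieDeriv (hf.of_le (by norm_num)) (hf.of_le (by norm_num))
  obtain ⟨C₁, hhalf⟩ := exists_norm_comp_lieTaylor_id_sub_le hf₂ (hD.of_le (by norm_num)) hy
  obtain ⟨C₂, hmid⟩ := exists_norm_comp_sub_lieTaylor_le hf₂ (by exact_mod_cast hD) hy
  obtain ⟨C₃, hnext⟩ := exists_norm_comp_sub_lieTaylor_le (n := 4) hf contDiff_id hy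
  refine ⟨max (C₁ / 24 + C₂ / 24 + C₃) 1, by positivity, fun t ht h hh hle => ?_⟩
  calc ‖s2o4Step f h (y t) - y (t + h)‖
      ≤ _ := norm_s2o4Step_sub_le f h (y t) (y (t + h / 2)) (y (t + h))
    _ ≤ h ^ 2 / 3 * (C₁ * (h / 2) ^ 3) + h ^ 2 / 3 * (C₂ * (h / 2) ^ 3) + C₃ * h ^ 5 := by
      rw [s2o4Half_eq_lieTaylor]
      gcongr
      · exact hhalf t ht (h / 2) (by linarith) (by linarith)
      · exact hmid t ht (h / 2) (by linarith) (by linarith)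
      · exact hnext t ht h hh hle
    _ = (C₁ / 24 + C₂ / 24 + C₃) * h ^ 5 := by ring
    _ ≤ max (C₁ / 24 + C₂ / 24 + C₃) 1 * h ^ 5 := by
      gcongr
      exact le_max_left _ _

end S2O4

/-- The two-stage fourth-order (S2O4) update for an autonomous ODE `y' = f(y)` with
`f ∈ C⁴`, using the derivative `D(w) = Df(w)·f(w)` of `f` along the flow:
`w_half = y(t₀) + (Δt/2)f(y(t₀)) + (Δt²/8)D(y(t₀))` and
`w_next = y(t₀) + Δt·f(y(t₀)) + (Δt²/6)D(y(t₀)) + (Δt²/3)D(w_half)`,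
has local truncation error `O(Δt⁵)`, uniformly for `t₀` in the compact interval
`[0,T]`. -/
theorem S2O4_fourth_order
    (dim : ℕ) (T : ℝ) (hT : 0 < T)
    (f : EuclideanSpace ℝ (Fin dim) → EuclideanSpace ℝ (Fin dim))
    (hf : ContDiff ℝ 4 f)
    (y : ℝ → EuclideanSpace ℝ (Fin dim))
    (hy : ∀ t ∈ Set.Icc (0 : ℝ) T, HasDerivAt y (f (y t)) t) :
    ∃ C > (0 : ℝ), ∃ δ > (0 : ℝ), ∀ t₀ ∈ Set.Icc (0 : ℝ) T, ∀ Δt : ℝ,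
      0 < Δt → Δt ≤ δ → t₀ + Δt ≤ T →
      ‖(y t₀ + Δt • f (y t₀)
          + (Δt ^ 2 / 6) • fderiv ℝ f (y t₀) (f (y t₀))
          + (Δt ^ 2 / 3) • (fun w => fderiv ℝ f w (f w))
              (y t₀ + (Δt / 2) • f (y t₀)
                + (Δt ^ 2 / 8) • fderiv ℝ f (y t₀) (f (y t₀))))
        - y (t₀ + Δt)‖ ≤ C * Δt ^ 5 := by
  obtain ⟨C, hC, herror⟩ := S2O4_fourth_order_general hf fun t ht => (hy t ht).hasDerivWithinAt
  exact ⟨C, hC, 1, one_pos, fun t₀ ht₀ Δt hpos _ hle => herror t₀ ht₀ Δt hpos.le hle⟩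
end
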